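/- Let L ∈ ℕ and let u, v be information structures in 𝒰(L), i.e. both players' signals lie in {0,…,L−1} almost surely. Then max over g ∈ 𝒢(L) of val(v,g) − val(u,g) equals min over q₁, q₂ ∈ 𝒬(L) of ‖q₁.u − v.q₂‖ (both attained), and consequently d(u,v) = max{ min_{q₁,q₂∈𝒬} ‖q₁.u − v.q₂‖ , min_{q₁,q₂∈𝒬} ‖u.q₁ − q₂.v‖ }. -/

import Mathlib

open scoped BigOperators ENNReal

namespace ValueDistance

/-- An information structure: a probability distribution on `K × ℕ × ℕ`
(state, signal of player 1, signal of player 2). -/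
abbrev InfoStruct (K : Type) := PMF (K × ℕ × ℕ)

/-- A behavior strategy / garbling : a map `ℕ → Δ(ℕ)`. -/
abbrev Garbling : Type := ℕ → PMF ℕ

variable {K : Type}

/-- `g` is a payoff function with action bound `L` : values in `[-1,1]`,
`g k i j = -1` when `i ≥ L`, and `g k i j = 1` when `i < L` and `j ≥ L`. -/
def IsPayoffL (L : ℕ) (g : K → ℕ → ℕ → ℝ) : Prop :=
  (∀ k i j, g k i j ∈ Set.Icc (-1 : ℝ) 1) ∧
  (∀ k i j, L ≤ i → g k i j = -1) ∧
  (∀ k i j, i < L → L ≤ j → g k i j = 1)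

/-- `g` belongs to the set `𝒢` of payoff functions. -/
def IsPayoff (g : K → ℕ → ℕ → ℝ) : Prop := ∃ L, IsPayoffL L g

/-- `g` belongs to the set `𝒢₁` of single-agent (player 1) problems. -/
def IsPayoff1 (g : K → ℕ → ℕ → ℝ) : Prop :=
  IsPayoff g ∧ ∀ k i j j', g k i j = g k i j'

/-- Expected payoff in the Bayesian game `Γ(u,g)` when player 1 uses the behavior
strategy `σ` and player 2 uses `τ`. -/
noncomputable def payoff (u : InfoStruct K) (g : K → ℕ → ℕ → ℝ)
    (σ τ : Garbling) : ℝ :=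
  ∑' (x : K × ℕ × ℕ) (i : ℕ) (j : ℕ),
    (u x).toReal * (σ x.2.1 i).toReal * (τ x.2.2 j).toReal * g x.1 i j

/-- The value `val(u,g)` of the zero-sum Bayesian game `Γ(u,g)`
(the common value of `sup inf` and `inf sup` of the expected payoff;
we take `sup inf` as the definition). -/
noncomputable def val (u : InfoStruct K) (g : K → ℕ → ℕ → ℝ) : ℝ :=
  ⨆ σ : Garbling, ⨅ τ : Garbling, payoff u g σ τ

/-- Total variation distance `‖u − v‖`. -/
noncomputable def tv {α : Type} (u v : PMF α) : ℝ :=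
  ∑' x : α, |(u x).toReal - (v x).toReal|

/-- `q.u` : player 1's signal garbled through `q`. -/
noncomputable def garbleLeft (q : Garbling) (u : InfoStruct K) : InfoStruct K :=
  u.bind (fun x => (q x.2.1).map (fun c => (x.1, c, x.2.2)))

/-- `u.q` : player 2's signal garbled through `q`. -/
noncomputable def garbleRight (u : InfoStruct K) (q : Garbling) : InfoStruct K :=
  u.bind (fun x => (q x.2.2).map (fun d => (x.1, x.2.1, d)))

/-- The value-based distance `d(u,v) = sup_{g ∈ 𝒢} |val(u,g) − val(v,g)|`. -/
noncomputable def dVal (u v : InfoStruct K) : ℝ :=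
  ⨆ g : {g : K → ℕ → ℕ → ℝ // IsPayoff g}, |val u g.1 - val v g.1|

/-- The single-agent distance `d₁(u,v) = sup_{g ∈ 𝒢₁} |val(u,g) − val(v,g)|`. -/
noncomputable def d1 (u v : InfoStruct K) : ℝ :=
  ⨆ g : {g : K → ℕ → ℕ → ℝ // IsPayoff1 g}, |val u g.1 - val v g.1|

/-- Marginal of an information structure on `K × ℕ` (state, player 1's signal). -/
noncomputable def marg1 (u : InfoStruct K) : PMF (K × ℕ) :=
  u.map (fun x => (x.1, x.2.1))

/-- Garbling of a single-agent information structure: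
`(q.w)(k,c) = Σ_s w(k,s)·q(s)({c})`. -/
noncomputable def garble1 (q : Garbling) (w : PMF (K × ℕ)) : PMF (K × ℕ) :=
  w.bind (fun x => (q x.2).map (fun c => (x.1, c)))

/-- Marginal of an information structure on the states. -/
noncomputable def margK (u : InfoStruct K) : PMF K := u.map Prod.fst

/-- Marginal of an information structure on `K × ℕ` (state, player 2's signal). -/
noncomputable def margKD (u : InfoStruct K) : PMF (K × ℕ) :=
  u.map (fun x => (x.1, x.2.2))

/-- `σ.q` : on signal `c`, draw `c'` according to `q(c)` and play `σ(c')`. -/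
noncomputable def compGarble (σ q : Garbling) : Garbling :=
  fun c => (q c).bind σ

/-- `u ∈ 𝒰(L)` : both players' signals are `< L` with probability 1. -/
def InU (L : ℕ) (u : InfoStruct K) : Prop :=
  ∀ x : K × ℕ × ℕ, u x ≠ 0 → x.2.1 < L ∧ x.2.2 < L

/-- `q ∈ 𝒬(L)` : garbling with values supported on `{0,…,L−1}`. -/
def GarblingIn (L : ℕ) (q : Garbling) : Prop :=
  ∀ n m, q n m ≠ 0 → m < L

/-- The two players' signals are conditionally independent given the state:
`u(k)·u(k,c,d) = u(k,c)·u(k,d)` for all `k, c, d`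
(equivalently `u(c,d|k) = u(c|k)·u(d|k)` whenever `u(k) > 0`). -/
def CondIndep (u : InfoStruct K) : Prop :=
  ∀ (k : K) (c d : ℕ),
    (∑' y : ℕ × ℕ, u (k, y)) * u (k, c, d)
      = (∑' d' : ℕ, u (k, c, d')) * (∑' c' : ℕ, u (k, c', d))

end ValueDistance

namespace ValueDistance


/-- expectation -/
noncomputable def E {α : Type} (p : PMF α) (f : α → ℝ) : ℝ := ∑' x, (p x).toReal * f x

section
variable {α β : Type}

theorem pmf_summable (p : PMF α) : Summable fun x => (p x).toReal :=
  ENNReal.summable_toReal p.tsum_coe_ne_top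

theorem pmf_tsum (p : PMF α) : ∑' x, (p x).toReal = 1 := by
  rw [← ENNReal.tsum_toReal_eq (fun x => p.apply_ne_top x), p.tsum_coe]; simp

theorem E_abs (p : PMF α) (f : α → ℝ) (hf : ∀ x, |f x| ≤ 1) :
    Summable fun x => (p x).toReal * f x := by
  refine Summable.of_norm_bounded (pmf_summable p) fun x => ?_
  rw [Real.norm_eq_abs, abs_mul, abs_of_nonneg ENNReal.toReal_nonneg]
  exact mul_le_of_le_one_right ENNReal.toReal_nonneg (hf x)

theorem E_le_one (p : PMF α) (f : α → ℝ) (hf : ∀ x, |f x| ≤ 1) : |E p f| ≤ 1 := by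
  rw [← pmf_tsum p, ← Real.norm_eq_abs]
  refine tsum_of_norm_bounded (pmf_summable p).hasSum fun x => ?_
  rw [Real.norm_eq_abs, abs_mul, abs_of_nonneg ENNReal.toReal_nonneg]
  exact mul_le_of_le_one_right ENNReal.toReal_nonneg (hf x)

theorem E_mono (p : PMF α) (f g : α → ℝ) (hf : ∀ x, |f x| ≤ 1) (hg : ∀ x, |g x| ≤ 1)
    (h : ∀ x, p x ≠ 0 → f x ≤ g x) : E p f ≤ E p g := by
  refine Summable.tsum_le_tsum (fun x => ?_) (E_abs p f hf) (E_abs p g hg)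
  by_cases hx : p x = 0
  · simp [hx]
  · exact mul_le_mul_of_nonneg_left (h x hx) ENNReal.toReal_nonneg

theorem E_congr (p : PMF α) (f g : α → ℝ) 
    (h : ∀ x, p x ≠ 0 → f x = g x) : E p f = E p g := by
  refine tsum_congr (fun x => ?_)
  by_cases hx : p x = 0
  · simp [hx]
  · rw [h x hx]

theorem joint_summable (p : PMF α) (w : α → PMF β) (f : α → β → ℝ) (hf : ∀ x y, |f x y| ≤ 1) :
    Summable (Function.uncurry fun x y => (p x).toReal * ((w x y).toReal * f x y)) := by
  have h : Summable fun z : α × β => (p z.1 * w z.1 z.2).toReal := by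
    apply ENNReal.summable_toReal
    rw [ENNReal.tsum_prod (f := fun x y => p x * w x y)]
    simp_rw [ENNReal.tsum_mul_left, PMF.tsum_coe]
    simp [PMF.tsum_coe]
  refine Summable.of_norm_bounded h fun z => ?_
  simp only [Function.uncurry]
  rw [ENNReal.toReal_mul, ← mul_assoc, Real.norm_eq_abs, abs_mul,
    abs_of_nonneg (mul_nonneg ENNReal.toReal_nonneg ENNReal.toReal_nonneg)]
  exact mul_le_of_le_one_right (mul_nonneg ENNReal.toReal_nonneg ENNReal.toReal_nonneg) (hf _ _)

theorem E_bind (p : PMF α) (w : α → PMF β) (f : β → ℝ) (hf : ∀ x, |f x| ≤ 1) :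
    E (p.bind w) f = E p (fun x => E (w x) f) := by
  unfold E
  simp_rw [← tsum_mul_left]
  rw [← (joint_summable p w (fun _ y => f y) (fun _ y => hf y)).tsum_comm]
  refine tsum_congr fun y => ?_
  rw [PMF.bind_apply, ENNReal.tsum_toReal_eq, ← tsum_mul_right]
  · simp [mul_assoc]
  · intro a; exact ENNReal.mul_ne_top (p.apply_ne_top a) ((w a).apply_ne_top y)

theorem E_pure (a : α) (f : α → ℝ) : E (PMF.pure a) f = f a := by
  unfold E
  rw [tsum_eq_single a]
  · simp
  · intro b hb; simp [hb]

theorem E_map (p : PMF α) (h : α → β) (f : β → ℝ) (hf : ∀ x, |f x| ≤ 1) :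
    E (p.map h) f = E p (fun x => f (h x)) := by
  rw [← PMF.bind_pure_comp, E_bind _ _ _ hf]
  simp [E_pure]

theorem E_comm (p : PMF α) (w : PMF β) (f : α → β → ℝ) (hf : ∀ x y, |f x y| ≤ 1) :
    E p (fun x => E w (f x)) = E w (fun y => E p (fun x => f x y)) := by
  unfold E
  simp_rw [← tsum_mul_left]
  rw [← (joint_summable p (fun _ => w) f hf).tsum_comm]
  refine tsum_congr fun y => tsum_congr fun x => by ring

theorem E_sub_le_tv (p q : PMF α) (f : α → ℝ) (hf : ∀ x, |f x| ≤ 1) :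
    E q f - E p f ≤ tv p q := by
  unfold E tv
  rw [← (E_abs q f hf).tsum_sub (E_abs p f hf)]
  refine Summable.tsum_le_tsum (fun x => ?_) ((E_abs q f hf).sub (E_abs p f hf))
    ((pmf_summable p).sub (pmf_summable q)).abs
  rw [← sub_mul, abs_sub_comm]
  refine (le_abs_self _).trans ?_
  rw [abs_mul]
  exact mul_le_of_le_one_right (abs_nonneg _) (hf x)

theorem tv_comm (p q : PMF α) : tv p q = tv q p := by
  unfold tv; simp_rw [abs_sub_comm]

theorem exists_tv (p q : PMF α) : ∃ f : α → ℝ, (∀ x, |f x| ≤ 1) ∧ tv p q = E q f - E p f := by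
  have hs : ∀ r : ℝ, |(if 0 ≤ r then (1 : ℝ) else -1)| ≤ 1 := by
    intro r; split_ifs <;> simp
  refine ⟨fun x => if 0 ≤ (q x).toReal - (p x).toReal then 1 else -1, fun x => hs _, ?_⟩
  unfold E tv
  rw [← (E_abs q _ fun x => hs _).tsum_sub (E_abs p _ fun x => hs _)]
  refine tsum_congr fun x => ?_
  rw [abs_sub_comm, ← sub_mul]
  split_ifs with h
  · rw [abs_of_nonneg h, mul_one]
  · rw [abs_of_neg (not_le.1 h)]; ring

theorem E_fintype [Fintype α] (p : PMF α) (f : α → ℝ) : E p f = ∑ x, (p x).toReal * f x :=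
  tsum_fintype _

end

section
variable {K : Type}

def embK (L : ℕ) (x : K × Fin L × Fin L) : K × ℕ × ℕ := (x.1, x.2.1, x.2.2)

theorem E_InU [Fintype K] {L : ℕ} {u : InfoStruct K} (hu : InU L u) (f : K × ℕ × ℕ → ℝ) :
    E u f = ∑ x : K × Fin L × Fin L, (u (embK L x)).toReal * f (embK L x) := by
  unfold E
  rw [← tsum_fintype (L := .unconditional _)]
  symm
  refine Function.Injective.tsum_eq (g := embK L) (f := fun x => (u x).toReal * f x) ?_ ?_
  · rintro ⟨k, c, d⟩ ⟨k', c', d'⟩ h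
    simp [embK, Fin.ext_iff] at h ⊢; exact h
  · rintro ⟨k, c, d⟩ h
    have h1 : u (k, c, d) ≠ 0 := by
      intro h0; apply h; simp [h0]
    obtain ⟨hc, hd⟩ := hu _ h1
    exact ⟨(k, ⟨c, hc⟩, ⟨d, hd⟩), rfl⟩

theorem payoff_eq (u : InfoStruct K) (g : K → ℕ → ℕ → ℝ) (σ τ : Garbling) :
    payoff u g σ τ = E u (fun x => E (σ x.2.1) fun i => E (τ x.2.2) fun j => g x.1 i j) := by
  unfold payoff E
  simp_rw [← tsum_mul_left, mul_assoc]

def Bdd (g : K → ℕ → ℕ → ℝ) : Prop := ∀ k i j, |g k i j| ≤ 1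

theorem IsPayoffL.bdd {L : ℕ} {g : K → ℕ → ℕ → ℝ} (h : IsPayoffL L g) : Bdd g := fun k i j =>
  abs_le.2 (h.1 k i j)

theorem E_garbleLeft (q : Garbling) (u : InfoStruct K) (f : K × ℕ × ℕ → ℝ) (hf : ∀ x, |f x| ≤ 1) :
    E (garbleLeft q u) f = E u fun x => E (q x.2.1) fun c => f (x.1, c, x.2.2) := by
  unfold garbleLeft
  rw [E_bind _ _ _ hf]
  simp_rw [E_map _ _ _ hf]

theorem E_garbleRight (q : Garbling) (u : InfoStruct K) (f : K × ℕ × ℕ → ℝ) (hf : ∀ x, |f x| ≤ 1) :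
    E (garbleRight u q) f = E u fun x => E (q x.2.2) fun c => f (x.1, x.2.1, c) := by
  unfold garbleRight
  rw [E_bind _ _ _ hf]
  simp_rw [E_map _ _ _ hf]

theorem payoff_garbleLeft (q : Garbling) (u : InfoStruct K) (g : K → ℕ → ℕ → ℝ) (hg : Bdd g)
    (σ τ : Garbling) : payoff (garbleLeft q u) g σ τ = payoff u g (compGarble σ q) τ := by
  rw [payoff_eq, payoff_eq, E_garbleLeft]
  · refine E_congr _ _ _ fun x _ => ?_
    unfold compGarble
    rw [E_bind]
    exact fun i => E_le_one _ _ fun j => hg _ _ _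
  · exact fun x => E_le_one _ _ fun i => E_le_one _ _ fun j => hg _ _ _

theorem payoff_garbleRight (q : Garbling) (u : InfoStruct K) (g : K → ℕ → ℕ → ℝ) (hg : Bdd g)
    (σ τ : Garbling) : payoff (garbleRight u q) g σ τ = payoff u g σ (compGarble τ q) := by
  rw [payoff_eq, payoff_eq, E_garbleRight]
  · refine E_congr _ _ _ fun x _ => ?_
    unfold compGarble
    rw [E_comm, E_bind]
    · refine E_congr _ _ _ fun i _ => ?_
      rw [E_comm]
      exact fun _ j => hg _ _ _
    · exact fun _ => E_le_one _ _ fun j => hg _ _ _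
    · exact fun _ _ => hg _ _ _
  · exact fun x => E_le_one _ _ fun i => E_le_one _ _ fun j => hg _ _ _

theorem payoff_abs (u : InfoStruct K) {g : K → ℕ → ℕ → ℝ} (hg : Bdd g) (σ τ : Garbling) :
    |payoff u g σ τ| ≤ 1 := by
  rw [payoff_eq]
  exact E_le_one _ _ fun x => E_le_one _ _ fun i => E_le_one _ _ fun j => hg _ _ _

theorem inf_bdd (u : InfoStruct K) {g : K → ℕ → ℕ → ℝ} (hg : Bdd g) (σ : Garbling) :
    BddBelow (Set.range fun τ => payoff u g σ τ) :=
  ⟨-1, by rintro _ ⟨τ, rfl⟩; exact (abs_le.1 (payoff_abs u hg σ τ)).1⟩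

instance : Nonempty Garbling := ⟨PMF.pure⟩

theorem sup_bdd (u : InfoStruct K) {g : K → ℕ → ℕ → ℝ} (hg : Bdd g) :
    BddAbove (Set.range fun σ => ⨅ τ, payoff u g σ τ) :=
  ⟨1, by
    rintro _ ⟨σ, rfl⟩
    exact (ciInf_le (inf_bdd u hg σ) PMF.pure).trans (abs_le.1 (payoff_abs u hg σ _)).2⟩

/-- val v g - val u g is at most the distance of garblings -/
theorem val_sub_le (u v : InfoStruct K) {g : K → ℕ → ℕ → ℝ} (hg : Bdd g) (q₁ q₂ : Garbling) :
    val v g - val u g ≤ tv (garbleLeft q₁ u) (garbleRight v q₂) := by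
  rw [sub_le_iff_le_add, val]
  refine ciSup_le fun σ => ?_
  have h1 : (⨅ τ, payoff u g (compGarble σ q₁) τ) ≤ val u g :=
    le_ciSup (sup_bdd u hg) (compGarble σ q₁)
  rw [← sub_le_iff_le_add']
  refine le_trans ?_ h1
  refine le_ciInf fun τ => ?_
  have h2 := ciInf_le (inf_bdd v hg σ) (compGarble τ q₂)
  rw [← payoff_garbleRight _ _ _ hg] at h2
  rw [← payoff_garbleLeft _ _ _ hg]
  have h3 := E_sub_le_tv (garbleLeft q₁ u) (garbleRight v q₂) 
    (fun x => E (σ x.2.1) fun i => E (τ x.2.2) fun j => g x.1 i j)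
    (fun x => E_le_one _ _ fun i => E_le_one _ _ fun j => hg _ _ _)
  rw [← payoff_eq, ← payoff_eq] at h3
  linarith

end

section
variable {K : Type} {L : ℕ}

abbrev Mat (L : ℕ) := Fin L → Fin L → ℝ

def IsStoch (a : Mat L) : Prop := a ∈ Set.pi Set.univ fun _ : Fin L => stdSimplex ℝ (Fin L)

noncomputable def rowPMF (w : Fin L → ℝ) (h : w ∈ stdSimplex ℝ (Fin L)) : PMF (Fin L) :=
  PMF.ofFintype (fun i => ENNReal.ofReal (w i)) (by
    rw [← ENNReal.ofReal_sum_of_nonneg (fun i _ => h.1 i), h.2, ENNReal.ofReal_one])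

noncomputable def toG (hL : 0 < L) (a : Mat L) (h : IsStoch a) : Garbling := fun n =>
  if hn : n < L then (rowPMF (a ⟨n, hn⟩) (h _ trivial)).map Fin.val else PMF.pure 0

theorem toG_in (hL : 0 < L) (a : Mat L) (h : IsStoch a) : GarblingIn L (toG hL a h) := by
  intro n m hm
  unfold toG at hm
  split_ifs at hm with hn
  · have := (PMF.mem_support_iff _ _).2 hm
    rw [PMF.mem_support_map_iff] at this
    obtain ⟨i, -, rfl⟩ := this
    exact i.2
  · have := (PMF.mem_support_iff _ _).2 hm
    simp at this
    omega

theorem E_toG (hL : 0 < L) (a : Mat L) (h : IsStoch a) (c : Fin L) (f : ℕ → ℝ)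
    (hf : ∀ x, |f x| ≤ 1) : E (toG hL a h c) f = ∑ i, a c i * f i := by
  unfold toG
  rw [dif_pos c.2, E_map _ _ _ hf, E_fintype]
  refine Finset.sum_congr rfl fun i _ => ?_
  unfold rowPMF
  rw [PMF.ofFintype_apply, ENNReal.toReal_ofReal ((h c trivial).1 i)]

def clamp (hL : 0 < L) (n : ℕ) : Fin L := if h : n < L then ⟨n, h⟩ else ⟨0, hL⟩

noncomputable def ofG (hL : 0 < L) (τ : Garbling) : Mat L := fun c i =>
  ((τ c).map (clamp hL) i).toReal

theorem ofG_stoch (hL : 0 < L) (τ : Garbling) : IsStoch (ofG hL τ) := fun c _ =>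
  ⟨fun i => ENNReal.toReal_nonneg, by
    have := pmf_tsum ((τ c).map (clamp hL))
    rwa [tsum_fintype] at this⟩

theorem E_ofG (hL : 0 < L) (τ : Garbling) (c : Fin L) (f : Fin L → ℝ) (hf : ∀ x, |f x| ≤ 1) :
    ∑ i, ofG hL τ c i * f i = E (τ c) (fun n => f (clamp hL n)) := by
  rw [← E_map _ _ _ hf, E_fintype]
  rfl

/-- the bilinear form -/
noncomputable def F [Fintype K] (u v : InfoStruct K) (p : Mat L × Mat L)
    (g : K × Fin L × Fin L → ℝ) : ℝ :=
  ∑ x : K × Fin L × Fin L, ((v (embK L x)).toReal * (∑ j, p.2 x.2.2 j * g (x.1, x.2.1, j)) -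
    (u (embK L x)).toReal * (∑ i, p.1 x.2.1 i * g (x.1, i, x.2.2)))

theorem F_lin1 [Fintype K] (u v : InfoStruct K) (p p' : Mat L × Mat L)
    (g : K × Fin L × Fin L → ℝ) (s t : ℝ) :
    F u v (s • p + t • p') g = s * F u v p g + t * F u v p' g := by
  unfold F
  rw [Finset.mul_sum, Finset.mul_sum, ← Finset.sum_add_distrib]
  refine Finset.sum_congr rfl fun x _ => ?_
  simp only [Prod.snd_add, Prod.fst_add, Prod.smul_fst, Prod.smul_snd, Pi.add_apply, Pi.smul_apply,
    smul_eq_mul, add_mul, Finset.sum_add_distrib, mul_assoc, ← Finset.mul_sum]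
  ring

theorem F_lin2 [Fintype K] (u v : InfoStruct K) (p : Mat L × Mat L)
    (g g' : K × Fin L × Fin L → ℝ) (s t : ℝ) :
    F u v p (s • g + t • g') = s * F u v p g + t * F u v p g' := by
  unfold F
  rw [Finset.mul_sum, Finset.mul_sum, ← Finset.sum_add_distrib]
  refine Finset.sum_congr rfl fun x _ => ?_
  simp only [Pi.add_apply, Pi.smul_apply,
    smul_eq_mul, mul_add, Finset.sum_add_distrib, mul_left_comm _ s, mul_left_comm _ t,
    ← Finset.mul_sum]
  ring

theorem exists_saddle [Fintype K] (hL : 0 < L) (u v : InfoStruct K) :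
    ∃ a b : Mat L, IsStoch a ∧ IsStoch b ∧ ∃ g : K × Fin L × Fin L → ℝ, (∀ x, |g x| ≤ 1) ∧
      ∀ a' b' : Mat L, IsStoch a' → IsStoch b' → ∀ g' : K × Fin L × Fin L → ℝ, (∀ x, |g' x| ≤ 1) →
        F u v (a, b) g' ≤ F u v (a', b') g := by
  set P : Set (Mat L) := Set.pi Set.univ fun _ : Fin L => stdSimplex ℝ (Fin L) with hP
  set G : Set (K × Fin L × Fin L → ℝ) := Set.pi Set.univ fun _ => Set.Icc (-1 : ℝ) 1 with hG
  have cP : Convex ℝ P := convex_pi fun _ _ => convex_stdSimplex ℝ _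
  have kP : IsCompact P := isCompact_univ_pi fun _ => isCompact_stdSimplex ℝ _
  have nP : P.Nonempty := ⟨_, ofG_stoch hL PMF.pure⟩
  have cG : Convex ℝ G := convex_pi fun _ _ => convex_Icc _ _
  have kG : IsCompact G := isCompact_univ_pi fun _ => isCompact_Icc
  have nG : G.Nonempty := ⟨0, fun _ _ => by simp⟩
  obtain ⟨⟨a, b⟩, hab, g, hg, h⟩ := Sion.exists_isSaddlePointOn (X := P ×ˢ P) (Y := G)
    (f := F u v) (nP.prod nP) (cP.prod cP) (kP.prod kP)
    (fun g _ => by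
      refine (Continuous.continuousOn ?_).lowerSemicontinuousOn
      unfold F; fun_prop)
    (fun g _ => by
      refine ConvexOn.quasiconvexOn ⟨cP.prod cP, fun x _ y _ s t _ _ _ => ?_⟩
      exact (F_lin1 u v x y g s t).le)
    cG nG kG
    (fun g _ => by
      refine (Continuous.continuousOn ?_).upperSemicontinuousOn
      unfold F; fun_prop)
    (fun g _ => by
      refine ConcaveOn.quasiconcaveOn ⟨cG, fun x _ y _ s t _ _ _ => ?_⟩
      exact (F_lin2 u v g x y s t).ge)
  exact ⟨a, b, hab.1, hab.2, g, fun x => abs_le.2 (hg x trivial), fun a' b' ha hb g' hg' =>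
    h (a', b') ⟨ha, hb⟩ g' (fun x _ => abs_le.1 (hg' x))⟩

theorem F_toG [Fintype K] (hL : 0 < L) {u v : InfoStruct K} (hu : InU L u) (hv : InU L v)
    (a b : Mat L) (ha : IsStoch a) (hb : IsStoch b) (f : K × ℕ × ℕ → ℝ) (hf : ∀ x, |f x| ≤ 1) :
    F u v (a, b) (fun x => f (embK L x)) =
      E (garbleRight v (toG hL b hb)) f - E (garbleLeft (toG hL a ha) u) f := by
  rw [E_garbleRight _ _ _ hf, E_garbleLeft _ _ _ hf, E_InU hu, E_InU hv, ← Finset.sum_sub_distrib]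
  unfold F
  refine Finset.sum_congr rfl fun x _ => ?_
  simp only [embK]
  rw [E_toG _ _ _ _ _ (fun _ => hf _), E_toG _ _ _ _ _ (fun _ => hf _)]

/-- extension of a finite payoff -/
noncomputable def extG (g : K × Fin L × Fin L → ℝ) : K → ℕ → ℕ → ℝ := fun k i j =>
  if hi : i < L then if hj : j < L then g (k, ⟨i, hi⟩, ⟨j, hj⟩) else 1 else -1

theorem ext_payoff (g : K × Fin L × Fin L → ℝ) (hg : ∀ x, |g x| ≤ 1) : IsPayoffL L (extG g) := by
  refine ⟨fun k i j => ?_, fun k i j h => ?_, fun k i j h h' => ?_⟩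
  · unfold extG
    split_ifs
    · exact abs_le.1 (hg _)
    · norm_num
    · norm_num
  · simp [extG, not_lt.2 h]
  · simp [extG, h, not_lt.2 h']

theorem ext_fin (g : K × Fin L × Fin L → ℝ) (k : K) (i j : Fin L) : extG g k i j = g (k, i, j) := by
  simp [extG]

theorem main_dir [Fintype K] (hL : 0 < L) {u v : InfoStruct K} (hu : InU L u) (hv : InU L v)
    (g : K × Fin L × Fin L → ℝ) (hg : ∀ x, |g x| ≤ 1) (M : ℝ)
    (h : ∀ a' b' : Mat L, IsStoch a' → IsStoch b' → M ≤ F u v (a', b') g) :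
    M ≤ val v (extG g) - val u (extG g) := by
  have hb : Bdd (extG g) := (ext_payoff g hg).bdd
  rw [le_sub_iff_add_le, ← le_sub_iff_add_le']
  refine ciSup_le fun σ => ?_
  refine (ciInf_le (inf_bdd u hb σ) PMF.pure).trans ?_
  rw [le_sub_iff_add_le]
  refine le_trans ?_ (le_ciSup (sup_bdd v hb) PMF.pure)
  refine le_ciInf fun τ => ?_
  have h1 := h _ _ (ofG_stoch hL σ) (ofG_stoch hL τ)
  unfold F at h1
  rw [Finset.sum_sub_distrib] at h1
  have h2 : payoff u (extG g) σ PMF.pure ≤ ∑ x : K × Fin L × Fin L,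
      (u (embK L x)).toReal * (∑ i, ofG hL σ x.2.1 i * g (x.1, i, x.2.2)) := by
    rw [payoff_eq, E_InU hu]
    refine Finset.sum_le_sum fun x _ => mul_le_mul_of_nonneg_left ?_ ENNReal.toReal_nonneg
    rw [E_ofG _ _ _ _ (fun _ => hg _)]
    simp only [E_pure, embK]
    refine E_mono _ _ _ (fun _ => hb _ _ _) (fun _ => hg _) fun n _ => ?_
    unfold extG clamp
    split_ifs with h h'
    · simp
    · exact absurd x.2.2.2 h'
    · exact (abs_le.1 (hg _)).1
  have h3 : ∑ x : K × Fin L × Fin L, (v (embK L x)).toReal *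
      (∑ j, ofG hL τ x.2.2 j * g (x.1, x.2.1, j)) ≤ payoff v (extG g) PMF.pure τ := by
    rw [payoff_eq, E_InU hv]
    refine Finset.sum_le_sum fun x _ => mul_le_mul_of_nonneg_left ?_ ENNReal.toReal_nonneg
    rw [E_ofG _ _ _ _ (fun _ => hg _)]
    simp only [E_pure, embK]
    refine E_mono _ _ _ (fun _ => hg _) (fun _ => hb _ _ _) fun n _ => ?_
    unfold extG clamp
    rw [dif_pos x.2.1.2]
    split_ifs with h
    · simp
    · exact (abs_le.1 (hg _)).2
  linarith

theorem key [Fintype K] (L : ℕ) (u v : InfoStruct K) (hu : InU L u) (hv : InU L v) :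
    ∃ g₀ : K → ℕ → ℕ → ℝ, IsPayoffL L g₀ ∧
      ∃ q₁ q₂ : Garbling, GarblingIn L q₁ ∧ GarblingIn L q₂ ∧
        val v g₀ - val u g₀ = tv (garbleLeft q₁ u) (garbleRight v q₂) := by
  have hL : 0 < L := by
    obtain ⟨x, hx⟩ := u.support_nonempty
    have := (hu x hx).1
    omega
  obtain ⟨a, b, ha, hb, g, hg, h⟩ := exists_saddle hL u v
  refine ⟨extG g, ext_payoff g hg, toG hL a ha, toG hL b hb, toG_in _ _ _, toG_in _ _ _, ?_⟩
  apply le_antisymm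
  · exact val_sub_le u v (ext_payoff g hg).bdd _ _
  · obtain ⟨f, hf, hfe⟩ := exists_tv (garbleLeft (toG hL a ha) u) (garbleRight v (toG hL b hb))
    rw [hfe, ← F_toG hL hu hv a b ha hb f hf]
    exact main_dir hL hu hv g hg _ fun a' b' ha' hb' => h a' b' ha' hb' _ fun x => hf _

end

/-- Theorem 1 (second part): for `u, v ∈ 𝒰(L)`, the optima in the
characterization are attained by `L`-based games and garblings, and
`d(u,v) = max{ min_{q₁,q₂∈𝒬} ‖q₁.u − v.q₂‖ , min_{q₁,q₂∈𝒬} ‖u.q₁ − q₂.v‖ }`. -/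
theorem val_dist_characterization_L (K : Type) [Fintype K]
    (hK : 2 ≤ Fintype.card K) (L : ℕ) (u v : InfoStruct K)
    (hu : InU L u) (hv : InU L v) :
    (∃ g₀ : K → ℕ → ℕ → ℝ, IsPayoffL L g₀ ∧
      ∃ q₁ q₂ : Garbling, GarblingIn L q₁ ∧ GarblingIn L q₂ ∧
        (∀ g : K → ℕ → ℕ → ℝ, IsPayoffL L g →
          val v g - val u g ≤ val v g₀ - val u g₀) ∧
        (∀ q₁' q₂' : Garbling, GarblingIn L q₁' → GarblingIn L q₂' →
          tv (garbleLeft q₁ u) (garbleRight v q₂)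
            ≤ tv (garbleLeft q₁' u) (garbleRight v q₂')) ∧
        val v g₀ - val u g₀ = tv (garbleLeft q₁ u) (garbleRight v q₂)) ∧
    (∃ a₁ a₂ b₁ b₂ : Garbling,
      (∀ q₁' q₂' : Garbling,
        tv (garbleLeft a₁ u) (garbleRight v a₂)
          ≤ tv (garbleLeft q₁' u) (garbleRight v q₂')) ∧
      (∀ q₁' q₂' : Garbling,
        tv (garbleRight u b₁) (garbleLeft b₂ v)
          ≤ tv (garbleRight u q₁') (garbleLeft q₂' v)) ∧
      dVal u v = max (tv (garbleLeft a₁ u) (garbleRight v a₂))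
                     (tv (garbleRight u b₁) (garbleLeft b₂ v))) := by
  obtain ⟨g₀, hg₀, q₁, q₂, h1, h2, he⟩ := key L u v hu hv
  obtain ⟨g₁, hg₁, r₁, r₂, -, -, he'⟩ := key L v u hv hu
  refine ⟨⟨g₀, hg₀, q₁, q₂, h1, h2, fun g hg => ?_, fun q₁' q₂' _ _ => ?_, he⟩,
    q₁, q₂, r₂, r₁, fun q₁' q₂' => ?_, fun q₁' q₂' => ?_, ?_⟩
  · rw [he]; exact val_sub_le u v hg.bdd _ _
  · rw [← he]; exact val_sub_le u v hg₀.bdd _ _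
  · rw [← he]; exact val_sub_le u v hg₀.bdd _ _
  · rw [tv_comm, ← he', tv_comm]; exact val_sub_le v u hg₁.bdd _ _
  · rw [tv_comm (garbleRight u r₂)]
    have hle : ∀ g : {g : K → ℕ → ℕ → ℝ // IsPayoff g}, |val u g.1 - val v g.1| ≤
        max (tv (garbleLeft q₁ u) (garbleRight v q₂)) (tv (garbleLeft r₁ v) (garbleRight u r₂)) := by
      rintro ⟨g, L', hg⟩
      rw [abs_le']
      refine ⟨(val_sub_le v u hg.bdd _ _).trans (le_max_right _ _), ?_⟩
      rw [neg_sub]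
      exact (val_sub_le u v hg.bdd _ _).trans (le_max_left _ _)
    have hbd : BddAbove (Set.range fun g : {g : K → ℕ → ℕ → ℝ // IsPayoff g} =>
        |val u g.1 - val v g.1|) := ⟨_, by rintro _ ⟨g, rfl⟩; exact hle g⟩
    haveI : Nonempty {g : K → ℕ → ℕ → ℝ // IsPayoff g} := ⟨⟨g₀, L, hg₀⟩⟩
    apply le_antisymm
    · exact ciSup_le hle
    · refine max_le ?_ ?_
      · rw [← he, dVal]
        refine le_trans ?_ (le_ciSup hbd ⟨g₀, L, hg₀⟩)
        rw [abs_sub_comm]; exact le_abs_self _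
      · rw [← he', dVal]
        refine le_trans ?_ (le_ciSup hbd ⟨g₁, L, hg₁⟩)
        exact le_abs_self _


end ValueDistance
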